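/- (Disjunctive data-driven selection.) Let A be a binary treatment with potential outcomes Y_0, Y_1, let the observed outcome Y satisfy consistency, and let V = (V_i)_{i ∈ I} be a finite family of covariates such that V_I controls for confounding (Y_a ⊥⊥ A | V_I for a = 0, 1) and the joint law of (A, (V_i)_{i ∈ I}) is absolutely continuous with respect to P_A ⊗ ⨂_{i ∈ I} P_{V_i} with a density that is positive almost everywhere. Then the union of the treatment and outcome Markov boundaries controls for confounding: Y_a ⊥⊥ A | V_{R_A(V) ∪ R_{Y|A}(V)} for a = 0, 1. -/

import Mathlib

/-!
Every set of covariates that contains the treatment boundary controls for confounding.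

Call `J` sufficient if `P(A ∈ B | V) = P(A ∈ B | V_J)` for every Borel set `B`. Every treatment
Markov blanket is sufficient, because `X ⊥⊥ Z | W` means that conditioning on `(Z, W)` gives the
same probabilities of events of `X` as conditioning on `W` (`condExp_sup_of_condIndep`,
`condIndep_of_condExp_sup`). Positivity makes the law of `V` equivalent to the product of its
marginals, and then a Fubini argument shows that an intersection of two sufficient sets is
sufficient (`IsSufficient.inter`). As `I` is finite, the treatment boundary is sufficient, and
hence so is its union with the outcome boundary (`IsSufficient.mono`).

Finally, if `J` is sufficient and `Y_a ⊥⊥ A | V`, then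
`P(A ∈ B | Y_a, V) = P(A ∈ B | V) = P(A ∈ B | V_J)`, so the tower property gives
`P(A ∈ B | Y_a, V_J) = P(A ∈ B | V_J)`, that is `Y_a ⊥⊥ A | V_J`
(`IsSufficient.condIndepGiven`).
-/

open MeasureTheory ProbabilityTheory

/-- `X ⊥⊥ Y | W` under `μ`: conditional independence of the random elements `X` and `Y`
given the σ-algebra generated by the random element `W`. -/
def CondIndepGiven {Ω α β γ : Type*} [mΩ : MeasurableSpace Ω] [StandardBorelSpace Ω]
    [MeasurableSpace α] [MeasurableSpace β] [MeasurableSpace γ]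
    (μ : Measure Ω) [IsFiniteMeasure μ]
    (X : Ω → α) (Y : Ω → β) (W : Ω → γ) : Prop :=
  ∃ hle : MeasurableSpace.comap W inferInstance ≤ mΩ,
    CondIndepFun (MeasurableSpace.comap W inferInstance) hle X Y μ

/-- The subvector `(V_i)_{i ∈ J}` of a family of random variables. -/
def subvec {Ω I : Type*} (V : I → Ω → ℝ) (J : Set I) : Ω → (J → ℝ) :=
  fun ω j => V j ω

/-- The joint law of `(V_i)_{i ∈ I}` is absolutely continuous w.r.t. the product
`⨂_{i ∈ I} P_{V_i}` of its one-dimensional marginal laws, with a density that is positive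
almost everywhere. -/
def PositiveFamilyDensity {Ω I : Type*} [MeasurableSpace Ω] [Fintype I]
    (μ : Measure Ω) (V : I → Ω → ℝ) : Prop :=
  μ.map (fun ω i => V i ω) ≪ Measure.pi (fun i => μ.map (V i)) ∧
    ∀ᵐ x ∂(Measure.pi fun i => μ.map (V i)),
      0 < (μ.map (fun ω i => V i ω)).rnDeriv (Measure.pi fun i => μ.map (V i)) x

/-- The joint law of `(W, (V_i)_{i ∈ I})` is absolutely continuous w.r.t. the product
`P_W ⊗ ⨂_{i ∈ I} P_{V_i}` of its one-dimensional marginal laws, with a density that is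
positive almost everywhere. -/
def PositivePairDensity {Ω α I : Type*} [MeasurableSpace Ω] [MeasurableSpace α] [Fintype I]
    (μ : Measure Ω) (W : Ω → α) (V : I → Ω → ℝ) : Prop :=
  μ.map (fun ω => (W ω, fun i => V i ω)) ≪ (μ.map W).prod (Measure.pi fun i => μ.map (V i)) ∧
    ∀ᵐ x ∂((μ.map W).prod (Measure.pi fun i => μ.map (V i))),
      0 < (μ.map (fun ω => (W ω, fun i => V i ω))).rnDeriv
            ((μ.map W).prod (Measure.pi fun i => μ.map (V i))) x

/-- The joint law of `(W, U, (V_i)_{i ∈ I})` is absolutely continuous w.r.t. the product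
`P_W ⊗ P_U ⊗ ⨂_{i ∈ I} P_{V_i}` of its one-dimensional marginal laws, with a density that is
positive almost everywhere. -/
def PositiveTripleDensity {Ω I : Type*} [MeasurableSpace Ω] [Fintype I]
    (μ : Measure Ω) (W U : Ω → ℝ) (V : I → Ω → ℝ) : Prop :=
  μ.map (fun ω => (W ω, U ω, fun i => V i ω)) ≪
      (μ.map W).prod ((μ.map U).prod (Measure.pi fun i => μ.map (V i))) ∧
    ∀ᵐ x ∂((μ.map W).prod ((μ.map U).prod (Measure.pi fun i => μ.map (V i)))),
      0 < (μ.map (fun ω => (W ω, U ω, fun i => V i ω))).rnDeriv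
            ((μ.map W).prod ((μ.map U).prod (Measure.pi fun i => μ.map (V i)))) x

/-- `J ∈ 𝔯_A(V)`: `J` is a treatment Markov blanket of the family `V`,
i.e. `A ⊥⊥ V_{I∖J} | V_J`. -/
def IsTreatBlanket {Ω I : Type*} [MeasurableSpace Ω] [StandardBorelSpace Ω]
    (μ : Measure Ω) [IsFiniteMeasure μ] (A : Ω → ℝ) (V : I → Ω → ℝ) (J : Set I) : Prop :=
  CondIndepGiven μ A (subvec V (Set.univ \ J)) (subvec V J)

/-- `J ∈ 𝔯_{Y|A}(V)`: `J` is an outcome Markov blanket of the family `V`,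
i.e. `Y ⊥⊥ V_{I∖J} | (A, V_J)`. -/
def IsOutBlanket {Ω I : Type*} [MeasurableSpace Ω] [StandardBorelSpace Ω]
    (μ : Measure Ω) [IsFiniteMeasure μ] (A Y : Ω → ℝ) (V : I → Ω → ℝ) (J : Set I) : Prop :=
  CondIndepGiven μ Y (subvec V (Set.univ \ J)) (fun ω => (A ω, subvec V J ω))

/-- `R_A(V_J)`: the treatment Markov boundary of the subfamily `(V_i)_{i ∈ J}`, i.e. the
intersection of all `J' ⊆ J` such that `A ⊥⊥ V_{J∖J'} | V_{J'}`. -/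
def treatBoundary {Ω I : Type*} [MeasurableSpace Ω] [StandardBorelSpace Ω]
    (μ : Measure Ω) [IsFiniteMeasure μ] (A : Ω → ℝ) (V : I → Ω → ℝ) (J : Set I) : Set I :=
  ⋂₀ {J' : Set I | J' ⊆ J ∧ CondIndepGiven μ A (subvec V (J \ J')) (subvec V J')}

/-- `R_{Y|A}(V_J)`: the outcome Markov boundary of the subfamily `(V_i)_{i ∈ J}`, i.e. the
intersection of all `J' ⊆ J` such that `Y ⊥⊥ V_{J∖J'} | (A, V_{J'})`. -/
def outBoundary {Ω I : Type*} [MeasurableSpace Ω] [StandardBorelSpace Ω]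
    (μ : Measure Ω) [IsFiniteMeasure μ] (A Y : Ω → ℝ) (V : I → Ω → ℝ) (J : Set I) : Set I :=
  ⋂₀ {J' : Set I | J' ⊆ J ∧
        CondIndepGiven μ Y (subvec V (J \ J')) (fun ω => (A ω, subvec V J' ω))}

/-- `A` is a binary treatment taking values in `{0, 1}`. -/
def IsBinary {Ω : Type*} (A : Ω → ℝ) : Prop :=
  ∀ ω, A ω = 0 ∨ A ω = 1

/-- Consistency of the observed outcome `Y` with the potential outcomes `Y₀, Y₁`:
`Y = Y₁` a.s. on `{A = 1}` and `Y = Y₀` a.s. on `{A = 0}`. -/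
def Consistency {Ω : Type*} [MeasurableSpace Ω] (μ : Measure Ω) (A Y Y0 Y1 : Ω → ℝ) : Prop :=
  (∀ᵐ ω ∂μ, A ω = 1 → Y ω = Y1 ω) ∧ (∀ᵐ ω ∂μ, A ω = 0 → Y ω = Y0 ω)

/-- The random vector `C` controls for confounding: `Y_a ⊥⊥ A | C` for `a = 0, 1`. -/
def ControlsConfounding {Ω γ : Type*} [MeasurableSpace Ω] [StandardBorelSpace Ω]
    [MeasurableSpace γ] (μ : Measure Ω) [IsFiniteMeasure μ]
    (A Y0 Y1 : Ω → ℝ) (C : Ω → γ) : Prop :=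
  CondIndepGiven μ Y0 A C ∧ CondIndepGiven μ Y1 A C

/-- Conditional independence `m₁ ⊥⊥ m₂ | m'` says that adding the information in `m₂` to `m'` does
not change the conditional probabilities of events of `m₁`. -/
lemma condExp_sup_of_condIndep {Ω : Type*} {m' m₁ m₂ mΩ : MeasurableSpace Ω}
    [StandardBorelSpace Ω] {μ : Measure Ω} [IsFiniteMeasure μ]
    (hm' : m' ≤ mΩ) (hm₁ : m₁ ≤ mΩ) (hm₂ : m₂ ≤ mΩ)
    (h : CondIndep m' m₁ m₂ hm' μ) {s : Set Ω} (hs : MeasurableSet[m₁] s) :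
    μ⟦s | m₂ ⊔ m'⟧ =ᵐ[μ] μ⟦s | m'⟧ := by
  rw [condIndep_iff m' m₁ m₂ hm' hm₁ hm₂] at h
  have hint : ∀ u, MeasurableSet[mΩ] u → Integrable (u.indicator fun _ => (1 : ℝ)) μ :=
    fun u hu => (integrable_const 1).indicator hu
  have hle : m₂ ⊔ m' ≤ mΩ := sup_le hm₂ hm'
  have hsI := hint s (hm₁ s hs)
  -- The intersections of an event of `m₂` with an event of `m'` form a π-system generating
  -- `m₂ ⊔ m'`, so it suffices to compare the integrals over them.
  have hgen : m₂ ⊔ m' = MeasurableSpace.generateFrom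
      {t | ∃ u w, MeasurableSet[m₂] u ∧ MeasurableSet[m'] w ∧ t = u ∩ w} := by
    apply le_antisymm
    · refine sup_le (fun u hu => ?_) (fun w hw => ?_)
      · exact MeasurableSpace.measurableSet_generateFrom
          ⟨u, Set.univ, hu, MeasurableSet.univ, by simp⟩
      · exact MeasurableSpace.measurableSet_generateFrom
          ⟨Set.univ, w, MeasurableSet.univ, hw, by simp⟩
    · refine MeasurableSpace.generateFrom_le ?_
      rintro _ ⟨u, w, hu, hw, rfl⟩
      exact MeasurableSet.inter ((le_sup_left : m₂ ≤ m₂ ⊔ m') u hu)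
        ((le_sup_right : m' ≤ m₂ ⊔ m') w hw)
  have hpi : IsPiSystem {t | ∃ u w, MeasurableSet[m₂] u ∧ MeasurableSet[m'] w ∧ t = u ∩ w} := by
    rintro _ ⟨u, w, hu, hw, rfl⟩ _ ⟨u', w', hu', hw', rfl⟩ -
    exact ⟨u ∩ u', w ∩ w', hu.inter hu', hw.inter hw', Set.inter_inter_inter_comm _ _ _ _⟩
  have key : ∀ t, MeasurableSet[m₂ ⊔ m'] t →
      ∫ x in t, (μ⟦s | m'⟧) x ∂μ = ∫ x in t, s.indicator (fun _ => (1 : ℝ)) x ∂μ := by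
    refine MeasurableSpace.induction_on_inter hgen hpi (by simp) ?_ ?_ ?_
    · rintro _ ⟨u, w, hu, hw, rfl⟩
      have hu' := hm₂ u hu
      have hw' := hm' w hw
      have hprod : (u.indicator fun _ => (1 : ℝ)) * μ⟦s | m'⟧ = u.indicator (μ⟦s | m'⟧) := by
        ext x
        by_cases hx : x ∈ u <;> simp [hx]
      have hI : Integrable ((u.indicator fun _ => (1 : ℝ)) * μ⟦s | m'⟧) μ := by
        rw [hprod]; exact integrable_condExp.indicator hu'
      have e1 : μ[(u.indicator fun _ => (1 : ℝ)) * μ⟦s | m'⟧ | m'] =ᵐ[μ] μ⟦s ∩ u | m'⟧ := by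
        refine (condExp_mul_of_stronglyMeasurable_right stronglyMeasurable_condExp hI
          (hint u hu')).trans ?_
        rw [mul_comm]
        exact (h s u hs hu).symm
      calc ∫ x in u ∩ w, (μ⟦s | m'⟧) x ∂μ
          = ∫ x in w, ((u.indicator fun _ => (1 : ℝ)) * μ⟦s | m'⟧) x ∂μ := by
            rw [hprod, setIntegral_indicator hu', Set.inter_comm]
        _ = ∫ x in w, (μ[(u.indicator fun _ => (1 : ℝ)) * μ⟦s | m'⟧ | m']) x ∂μ :=
            (setIntegral_condExp hm' hI hw).symm
        _ = ∫ x in w, (μ⟦s ∩ u | m'⟧) x ∂μ :=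
            setIntegral_congr_ae hw' (e1.mono fun x hx _ => hx)
        _ = ∫ x in w, (s ∩ u).indicator (fun _ => (1 : ℝ)) x ∂μ :=
            setIntegral_condExp hm' (hint _ ((hm₁ s hs).inter hu')) hw
        _ = ∫ x in u ∩ w, s.indicator (fun _ => (1 : ℝ)) x ∂μ := by
            rw [Set.inter_comm u w, ← setIntegral_indicator hu', Set.indicator_indicator,
              Set.inter_comm u s]
    · intro t ht IH
      have a1 := integral_add_compl (hle t ht) (integrable_condExp (μ := μ) (m := m')
        (f := s.indicator fun _ => (1 : ℝ)))
      have a2 := integral_add_compl (hle t ht) hsI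
      have a3 := integral_condExp hm' (μ := μ) (f := s.indicator fun _ => (1 : ℝ))
      linarith
    · intro f hd hf IH
      rw [integral_iUnion (fun i => hle _ (hf i)) hd integrable_condExp.integrableOn,
        integral_iUnion (fun i => hle _ (hf i)) hd hsI.integrableOn]
      simp only [IH]
  refine (ae_eq_condExp_of_forall_setIntegral_eq hle hsI
    (fun _ _ _ => integrable_condExp.integrableOn) (fun t ht _ => key t ht) ?_).symm
  exact (stronglyMeasurable_condExp.mono (le_sup_right : m' ≤ m₂ ⊔ m')).aestronglyMeasurable

/-- Converse of `condExp_sup_of_condIndep`. -/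
lemma condIndep_of_condExp_sup {Ω : Type*} {m' m₁ m₂ mΩ : MeasurableSpace Ω}
    [StandardBorelSpace Ω] {μ : Measure Ω} [IsFiniteMeasure μ]
    (hm' : m' ≤ mΩ) (hm₁ : m₁ ≤ mΩ) (hm₂ : m₂ ≤ mΩ)
    (h : ∀ s, MeasurableSet[m₁] s → μ⟦s | m₂ ⊔ m'⟧ =ᵐ[μ] μ⟦s | m'⟧) :
    CondIndep m' m₁ m₂ hm' μ := by
  rw [condIndep_iff m' m₁ m₂ hm' hm₁ hm₂]
  intro s t hs ht
  have hint : ∀ u, MeasurableSet[mΩ] u → Integrable (u.indicator fun _ => (1 : ℝ)) μ :=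
    fun u hu => (integrable_const 1).indicator hu
  have hle : m₂ ⊔ m' ≤ mΩ := sup_le hm₂ hm'
  have hs' := hm₁ s hs
  have ht' := hm₂ t ht
  have hst : (s ∩ t).indicator (fun _ => (1 : ℝ)) =
      s.indicator (fun _ => (1 : ℝ)) * t.indicator (fun _ => (1 : ℝ)) := by
    ext x
    by_cases hx : x ∈ s <;> by_cases hy : x ∈ t <;> simp [hx, hy]
  have htm : StronglyMeasurable[m₂ ⊔ m'] (t.indicator fun _ => (1 : ℝ)) :=
    stronglyMeasurable_const.indicator ((le_sup_left : m₂ ≤ m₂ ⊔ m') t ht)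
  have hI : Integrable (μ⟦s | m'⟧ * t.indicator (fun _ => (1 : ℝ))) μ := by
    have : μ⟦s | m'⟧ * t.indicator (fun _ => (1 : ℝ)) = t.indicator (μ⟦s | m'⟧) := by
      ext x
      by_cases hx : x ∈ t <;> simp [hx]
    rw [this]
    exact integrable_condExp.indicator ht'
  have e1 : μ⟦s ∩ t | m₂ ⊔ m'⟧ =ᵐ[μ] μ⟦s | m'⟧ * t.indicator (fun _ => (1 : ℝ)) := by
    rw [hst]
    refine (condExp_mul_of_stronglyMeasurable_right htm ?_ (hint s hs')).trans ?_
    · rw [← hst]; exact hint _ (hs'.inter ht')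
    · exact (h s hs).mul Filter.EventuallyEq.rfl
  calc μ⟦s ∩ t | m'⟧ =ᵐ[μ] μ[μ⟦s ∩ t | m₂ ⊔ m'⟧ | m'] :=
        (condExp_condExp_of_le le_sup_right hle).symm
    _ =ᵐ[μ] μ[μ⟦s | m'⟧ * t.indicator (fun _ => (1 : ℝ)) | m'] := condExp_congr_ae e1
    _ =ᵐ[μ] μ⟦s | m'⟧ * μ⟦t | m'⟧ :=
        condExp_mul_of_stronglyMeasurable_left stronglyMeasurable_condExp hI (hint t ht')

lemma condExp_eq_of_aestronglyMeasurable {Ω : Type*} {m₁ m₂ mΩ : MeasurableSpace Ω}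
    {μ : Measure Ω} [IsFiniteMeasure μ] {f : Ω → ℝ} (h₁₂ : m₁ ≤ m₂) (h₂ : m₂ ≤ mΩ)
    (h : AEStronglyMeasurable[m₁] (μ[f | m₂]) μ) : μ[f | m₂] =ᵐ[μ] μ[f | m₁] :=
  (condExp_of_aestronglyMeasurable' (h₁₂.trans h₂) h integrable_condExp).symm.trans
    (condExp_condExp_of_le h₁₂ h₂)

/-- Replacing the coordinates outside `K` of a product-distributed vector by those of an
independent copy does not change its law. -/
lemma measurePreserving_piecewise {I : Type*} [Fintype I] (ν : I → Measure ℝ)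
    [∀ i, IsProbabilityMeasure (ν i)] (K : Set I) [∀ i, Decidable (i ∈ K)] :
    MeasurePreserving (fun p : (I → ℝ) × (I → ℝ) => K.piecewise p.1 p.2)
      ((Measure.pi ν).prod (Measure.pi ν)) (Measure.pi ν) := by
  have hm : Measurable (fun p : (I → ℝ) × (I → ℝ) => K.piecewise p.1 p.2) := by
    refine measurable_pi_iff.2 fun i => ?_
    by_cases hi : i ∈ K
    · simp only [Set.piecewise_eq_of_mem _ _ _ hi]; fun_prop
    · simp only [Set.piecewise_eq_of_notMem _ _ _ hi]; fun_prop
  refine ⟨hm, (Measure.pi_eq fun s hs => ?_).symm⟩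
  rw [Measure.map_apply hm (MeasurableSet.univ_pi hs)]
  have : (fun p : (I → ℝ) × (I → ℝ) => K.piecewise p.1 p.2) ⁻¹' (Set.univ.pi s) =
      (Set.univ.pi fun i => if i ∈ K then s i else Set.univ) ×ˢ
        (Set.univ.pi fun i => if i ∈ K then Set.univ else s i) := by
    ext p
    simp only [Set.mem_preimage, Set.mem_univ_pi, Set.mem_prod, ← forall_and]
    refine forall_congr' fun i => ?_
    by_cases hi : i ∈ K <;> simp [hi]
  rw [this, Measure.prod_prod, Measure.pi_pi, Measure.pi_pi, ← Finset.prod_mul_distrib]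
  refine Finset.prod_congr rfl fun i _ => ?_
  by_cases hi : i ∈ K <;> simp [hi]

/-- Positivity of the density of `(A, V)` makes the product of the marginals of `V` absolutely
continuous with respect to the joint law of `V`. -/
lemma pi_absolutelyContinuous_map {Ω I : Type*} [MeasurableSpace Ω] [Fintype I]
    {μ : Measure Ω} [IsProbabilityMeasure μ] {A : Ω → ℝ} {V : I → Ω → ℝ}
    (hA : Measurable A) (hV : ∀ i, Measurable (V i)) (hpos : PositivePairDensity μ A V) :
    Measure.pi (fun i => μ.map (V i)) ≪ μ.map (fun ω i => V i ω) := by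
  obtain ⟨hac, hd⟩ := hpos
  have : IsProbabilityMeasure (μ.map A) := Measure.isProbabilityMeasure_map hA.aemeasurable
  have : ∀ i, IsProbabilityMeasure (μ.map (V i)) :=
    fun i => Measure.isProbabilityMeasure_map (hV i).aemeasurable
  have hVm : Measurable (fun ω i => V i ω) := measurable_pi_iff.2 hV
  have hpair : Measurable (fun ω => (A ω, fun i => V i ω)) := hA.prodMk hVm
  have h1 := withDensity_absolutelyContinuous' (Measure.measurable_rnDeriv _ _).aemeasurable
    (hd.mono fun x hx => hx.ne')
  rw [Measure.withDensity_rnDeriv_eq _ _ hac] at h1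
  have h2 := h1.map measurable_snd
  rw [Measure.map_map measurable_snd hpair, Measure.map_snd_prod] at h2
  simpa [Function.comp_def] using h2

section Family

variable {Ω I : Type*}

lemma measurable_subvec [MeasurableSpace Ω] {V : I → Ω → ℝ} (hV : ∀ i, Measurable (V i))
    (J : Set I) : Measurable (subvec V J) :=
  measurable_pi_iff.2 fun j => hV j

lemma comap_subvec_mono (V : I → Ω → ℝ) {J K : Set I} (h : J ⊆ K) :
    MeasurableSpace.comap (subvec V J) inferInstance ≤
      MeasurableSpace.comap (subvec V K) inferInstance := by
  have : subvec V J = (fun (x : K → ℝ) (j : J) => x ⟨j, h j.2⟩) ∘ subvec V K := rfl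
  rw [this, ← MeasurableSpace.comap_comp]
  exact MeasurableSpace.comap_mono (Measurable.comap_le (by fun_prop))

lemma comap_subvec_sup (V : I → Ω → ℝ) (J : Set I) :
    MeasurableSpace.comap (subvec V (Set.univ \ J)) inferInstance ⊔
        MeasurableSpace.comap (subvec V J) inferInstance =
      MeasurableSpace.comap (subvec V Set.univ) inferInstance := by
  refine le_antisymm (sup_le (comap_subvec_mono V (Set.subset_univ _))
    (comap_subvec_mono V (Set.subset_univ _))) ?_
  refine Measurable.comap_le (m₁ := _ ⊔ _) ?_
  refine @measurable_pi_iff _ _ _ (_ ⊔ _) _ _ |>.2 fun i => ?_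
  have key : ∀ (K : Set I) (hi : (i : I) ∈ K),
      Measurable[MeasurableSpace.comap (subvec V K) inferInstance] fun ω => V i ω :=
    fun K hi => (measurable_pi_apply (⟨i, hi⟩ : K)).comp (comap_measurable (subvec V K))
  by_cases hi : (i : I) ∈ J
  · exact (key J hi).mono le_sup_right le_rfl
  · exact (key (Set.univ \ J) ⟨trivial, hi⟩).mono le_sup_left le_rfl

/-- `V_J` is sufficient for `A`: events of `A` have the same conditional probability given `V_J`
as given the whole family `V`. -/
def IsSufficient [MeasurableSpace Ω] (μ : Measure Ω) (A : Ω → ℝ) (V : I → Ω → ℝ)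
    (J : Set I) : Prop :=
  ∀ s, MeasurableSet[MeasurableSpace.comap A inferInstance] s →
    μ⟦s | MeasurableSpace.comap (subvec V Set.univ) inferInstance⟧ =ᵐ[μ]
      μ⟦s | MeasurableSpace.comap (subvec V J) inferInstance⟧

variable [MeasurableSpace Ω] {μ : Measure Ω} [IsProbabilityMeasure μ] {A : Ω → ℝ}
  {V : I → Ω → ℝ}

lemma IsTreatBlanket.isSufficient [StandardBorelSpace Ω] (hA : Measurable A)
    (hV : ∀ i, Measurable (V i)) {J : Set I} (h : IsTreatBlanket μ A V J) : IsSufficient μ A V J := by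
  obtain ⟨hle, hci⟩ := h
  intro s hs
  have := condExp_sup_of_condIndep hle hA.comap_le (measurable_subvec hV _).comap_le hci hs
  rwa [comap_subvec_sup] at this

lemma IsSufficient.mono (hV : ∀ i, Measurable (V i)) {J K : Set I} (hJK : J ⊆ K)
    (h : IsSufficient μ A V J) : IsSufficient μ A V K := by
  intro s hs
  refine condExp_eq_of_aestronglyMeasurable (comap_subvec_mono V (Set.subset_univ _))
    (measurable_subvec hV _).comap_le ?_
  exact ((stronglyMeasurable_condExp.mono
    (comap_subvec_mono V hJK)).aestronglyMeasurable).congr (h s hs).symm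

/-- Sufficient sets are closed under intersection. If `P(A ∈ B | V)` equals both `f(V_J)` and
`g(V_K)`, then `f(v_J) = g(v_K)` for almost every `v` under the product of the marginals; freezing
the coordinates outside `K` at a generic `w` shows that `g(v_K)` depends only on `v_{J ∩ K}`. -/
lemma IsSufficient.inter [Fintype I] (hV : ∀ i, Measurable (V i))
    (hac : Measure.pi (fun i => μ.map (V i)) ≪ μ.map (fun ω i => V i ω))
    (hac' : μ.map (fun ω i => V i ω) ≪ Measure.pi (fun i => μ.map (V i)))
    {J K : Set I} (hJ : IsSufficient μ A V J) (hK : IsSufficient μ A V K) :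
    IsSufficient μ A V (J ∩ K) := by
  classical
  have : ∀ i, IsProbabilityMeasure (μ.map (V i)) :=
    fun i => Measure.isProbabilityMeasure_map (hV i).aemeasurable
  have hVm : Measurable (fun ω i => V i ω) := measurable_pi_iff.2 hV
  intro s hs
  refine condExp_eq_of_aestronglyMeasurable (comap_subvec_mono V (Set.subset_univ _))
    (measurable_subvec hV _).comap_le ?_
  obtain ⟨f, hf, hfe⟩ := (stronglyMeasurable_condExp (μ := μ)
    (m := MeasurableSpace.comap (subvec V J) inferInstance)
    (f := s.indicator fun _ => (1 : ℝ))).exists_eq_measurable_comp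
  obtain ⟨g, hg, hge⟩ := (stronglyMeasurable_condExp (μ := μ)
    (m := MeasurableSpace.comap (subvec V K) inferInstance)
    (f := s.indicator fun _ => (1 : ℝ))).exists_eq_measurable_comp
  have hrJ : Measurable fun (v : I → ℝ) (j : J) => v j := by fun_prop
  have hrK : Measurable fun (v : I → ℝ) (k : K) => v k := by fun_prop
  have hfg : ∀ᵐ v ∂Measure.pi (fun i => μ.map (V i)),
      f (fun j : J => v j) = g (fun k : K => v k) := by
    refine hac.ae_le ?_
    refine (ae_map_iff hVm.aemeasurable (measurableSet_eq_fun (hf.measurable.comp hrJ)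
      (hg.measurable.comp hrK))).2 ?_
    filter_upwards [hJ s hs, hK s hs] with ω h1 h2
    rw [h1, hfe, hge] at h2
    exact h2
  have h2 := (measurePreserving_piecewise (fun i => μ.map (V i)) K).quasiMeasurePreserving.ae hfg
  have h3 := Measure.ae_ae_of_ae_prod (Measure.measurePreserving_swap.quasiMeasurePreserving.ae h2)
  -- `w` supplies the coordinates in `J \ K`, so that `f(v_J)` is evaluated at `v_{J ∩ K}` alone.
  obtain ⟨w, hw⟩ := h3.exists
  have h4 := ae_of_ae_map hVm.aemeasurable (hac'.ae_le hw)
  let c : ((J ∩ K : Set I) → ℝ) → (J → ℝ) := fun x j =>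
    if hj : (j : I) ∈ K then x ⟨j, j.2, hj⟩ else w j
  have hc : Measurable c := by
    refine measurable_pi_iff.2 fun j => ?_
    by_cases hj : (j : I) ∈ K
    · simp only [c, hj, dif_pos]; fun_prop
    · simp only [c, hj, dif_neg, not_false_eq_true]; fun_prop
  refine ⟨fun ω => f (c (subvec V (J ∩ K) ω)), ?_, ?_⟩
  · exact ((hf.measurable.comp hc).comp (comap_measurable _)).stronglyMeasurable
  · filter_upwards [hK s hs, h4] with ω h5 h6
    rw [h5, hge]
    have e1 : (fun j : J => K.piecewise (fun i => V i ω) w j) = c (subvec V (J ∩ K) ω) := by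
      ext j
      by_cases hj : (j : I) ∈ K <;> simp [c, hj, subvec]
    have e2 : (fun k : K => K.piecewise (fun i => V i ω) w k) = subvec V K ω := by
      ext j
      simp [subvec]
    simp only [Prod.swap] at h6
    rw [e1, e2] at h6
    exact h6.symm

lemma isSufficient_treatBoundary [StandardBorelSpace Ω] [Fintype I] (hA : Measurable A)
    (hV : ∀ i, Measurable (V i))
    (hpos : PositivePairDensity μ A V) :
    IsSufficient μ A V (treatBoundary μ A V Set.univ) := by
  have hVm : Measurable (fun ω i => V i ω) := measurable_pi_iff.2 hV
  have hac := pi_absolutelyContinuous_map hA hV hpos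
  have hac' : μ.map (fun ω i => V i ω) ≪ Measure.pi (fun i => μ.map (V i)) := by
    have : IsProbabilityMeasure (μ.map A) := Measure.isProbabilityMeasure_map hA.aemeasurable
    have : ∀ i, IsProbabilityMeasure (μ.map (V i)) :=
      fun i => Measure.isProbabilityMeasure_map (hV i).aemeasurable
    have h2 := hpos.1.map measurable_snd
    rw [Measure.map_map measurable_snd (hA.prodMk hVm), Measure.map_snd_prod] at h2
    simpa [Function.comp_def] using h2
  have main : ∀ S : Set (Set I), S.Finite → (∀ J ∈ S, IsSufficient μ A V J) →
      IsSufficient μ A V (⋂₀ S) := by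
    intro S hS
    induction S, hS using Set.Finite.induction_on with
    | empty => intro _ s _; rw [Set.sInter_empty]
    | insert _ _ ih =>
      intro h
      rw [Set.sInter_insert]
      exact (h _ (Set.mem_insert _ _)).inter hV hac hac'
        (ih fun J hJ => h J (Set.mem_insert_of_mem _ hJ))
  exact main _ (Set.toFinite _) fun J hJ => IsTreatBlanket.isSufficient hA hV hJ.2

/-- Contraction: if `V` controls for the confounding of `A` and `Z`, so does every sufficient
subvector. -/
lemma IsSufficient.condIndepGiven [StandardBorelSpace Ω] {Z : Ω → ℝ} (hA : Measurable A)
    (hZ : Measurable Z)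
    (hV : ∀ i, Measurable (V i)) {J : Set I} (hJ : IsSufficient μ A V J)
    (h : CondIndepGiven μ Z A (subvec V Set.univ)) : CondIndepGiven μ Z A (subvec V J) := by
  obtain ⟨hle, hci⟩ := h
  have hJle := (measurable_subvec hV J).comap_le
  have hmono := comap_subvec_mono V (Set.subset_univ J)
  refine ⟨hJle, CondIndepFun.symm ?_⟩
  refine condIndep_of_condExp_sup hJle hA.comap_le hZ.comap_le fun s hs => ?_
  have h1 := condExp_sup_of_condIndep hle hA.comap_le hZ.comap_le (CondIndep.symm hci) hs
  have h2 := h1.trans (hJ s hs)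
  have h3 := condExp_eq_of_aestronglyMeasurable (μ := μ) (f := s.indicator fun _ => (1 : ℝ))
    (sup_le_sup_left hmono (MeasurableSpace.comap Z inferInstance)) (sup_le hZ.comap_le hle)
    ((stronglyMeasurable_condExp.mono (le_sup_right : _ ≤ MeasurableSpace.comap Z inferInstance ⊔
      MeasurableSpace.comap (subvec V J) inferInstance)).aestronglyMeasurable.congr h2.symm)
  exact h3.symm.trans h2

end Family

/-- Disjunctive data-driven selection: the union `R_A(V) ∪ R_{Y|A}(V)` of the
treatment and outcome Markov boundaries controls for confounding. -/
theorem union_boundaries_control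
    {Ω I : Type*} [MeasurableSpace Ω] [StandardBorelSpace Ω] [Fintype I]
    (μ : Measure Ω) [IsProbabilityMeasure μ]
    (A Y Y0 Y1 : Ω → ℝ) (V : I → Ω → ℝ)
    (hA : Measurable A) (hY : Measurable Y) (hY0 : Measurable Y0) (hY1 : Measurable Y1)
    (hV : ∀ i, Measurable (V i))
    (hbin : IsBinary A)
    (hcons : Consistency μ A Y Y0 Y1)
    (hS : ControlsConfounding μ A Y0 Y1 (subvec V Set.univ))
    (hpos : PositivePairDensity μ A V) :
    ControlsConfounding μ A Y0 Y1
      (subvec V (treatBoundary μ A V Set.univ ∪ outBoundary μ A Y V Set.univ)) := by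
  have h : IsSufficient μ A V
      (treatBoundary μ A V Set.univ ∪ outBoundary μ A Y V Set.univ) :=
    (isSufficient_treatBoundary hA hV hpos).mono hV Set.subset_union_left
  exact ⟨h.condIndepGiven hA hY0 hV hS.1, h.condIndepGiven hA hY1 hV hS.2⟩
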